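/- arXiv:2004.06421 — 2 statements merged into one kernel-verified Lean document; each statement's English description precedes it below -/
import Mathlib

section
/- Let t_1, …, t_j ∈ ℝ^n be orthonormal vectors, let Π = ∏_{i=1}^j (I_n − 2 t_i t_i^T), and let Π̃ be an n×n orthogonal matrix with operator norm error ‖Π̃ − Π‖ ≤ δ. Then for any A ∈ ℝ^{m×n} with rows A_1, …, A_m ∈ ℝ^n: Σ_{k=1}^m ‖((Π̃ + I_n)/2) A_k‖² ≤ Σ_{k=1}^m ‖A_k − Σ_{i=1}^j ⟨t_i, A_k⟩ t_i‖² + ‖A‖_F² · δ/2. -/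
/-!
For an orthogonal `Πt`, expanding the square gives `‖((Πt + I)/2) a‖² = (‖a‖² + ⟪Πt a, a⟫)/2`, and
Cauchy–Schwarz replaces `Πt` by `Π` here at a cost of at most `δ‖a‖²/2`. As the `tᵢ` are orthonormal,
the product of reflections acts as `Π a = a − 2 ∑ᵢ ⟪tᵢ, a⟫ tᵢ` (`toEuclideanCLM_prod_reflection`), so
`(‖a‖² + ⟪Π a, a⟫)/2 = ‖a‖² − ∑ᵢ ⟪tᵢ, a⟫² = ‖a − ∑ᵢ ⟪tᵢ, a⟫ tᵢ‖²`. Summing over the rows `a` of `A`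
turns `∑ ‖a‖²` into `‖A‖_F²`.
-/

open scoped BigOperators
open Matrix RealInnerProductSpace

noncomputable section

/-- The `k`-th row of a matrix, regarded as a vector of the Euclidean space `ℝ^n`. -/
noncomputable def matRow {m n : ℕ} (A : Matrix (Fin m) (Fin n) ℝ) (k : Fin m) :
    EuclideanSpace ℝ (Fin n) :=
  (WithLp.equiv 2 (Fin n → ℝ)).symm (A k)

theorem toEuclideanCLM_reflection {n : ℕ} (v x : EuclideanSpace ℝ (Fin n)) :
    Matrix.toEuclideanCLM (𝕜 := ℝ)
      ((1 : Matrix (Fin n) (Fin n) ℝ) - (2 : ℝ) • Matrix.vecMulVec v v) x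
      = x - (2 : ℝ) • ⟪v, x⟫ • v := by
  ext k
  simp [Matrix.ofLp_toEuclideanCLM, Matrix.vecMulVec_mulVec,
    EuclideanSpace.inner_eq_star_dotProduct, dotProduct_comm, mul_comm]

/-- Each `tᵢ` is orthogonal to every correction made by the other reflections,
so the corrections simply add up. -/
theorem toEuclideanCLM_prod_reflection {n j : ℕ}
    (t : Fin j → EuclideanSpace ℝ (Fin n)) (ht : Orthonormal ℝ t)
    (x : EuclideanSpace ℝ (Fin n)) :
    Matrix.toEuclideanCLM (𝕜 := ℝ) ((List.ofFn fun i =>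
      (1 : Matrix (Fin n) (Fin n) ℝ) - (2 : ℝ) • Matrix.vecMulVec (t i) (t i)).prod) x
      = x - (2 : ℝ) • ∑ i, ⟪t i, x⟫ • t i := by
  induction j with
  | zero => simp
  | succ j ih =>
    have h := ih (fun i => t i.succ) (ht.comp _ (Fin.succ_injective j))
    have h0 : ∀ i : Fin j, ⟪t 0, t i.succ⟫ = 0 := fun i =>
      ht.inner_eq_zero (Fin.succ_ne_zero i).symm
    rw [List.ofFn_succ, List.prod_cons, map_mul, mul_apply_eq_comp, h,
      toEuclideanCLM_reflection, Fin.sum_univ_succ]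
    simp only [inner_sub_right, inner_smul_right, inner_sum, h0, mul_zero,
      Finset.sum_const_zero, sub_zero, smul_add]
    abel

/-- Pythagoras for the orthonormal family `t`, phrased through the value of the product of
reflections at `x`. -/
theorem norm_sub_sum_sq {n j : ℕ}
    (t : Fin j → EuclideanSpace ℝ (Fin n)) (ht : Orthonormal ℝ t)
    (x : EuclideanSpace ℝ (Fin n)) :
    ‖x - ∑ i, ⟪t i, x⟫ • t i‖ ^ 2
      = (‖x‖ ^ 2 + ⟪x - (2 : ℝ) • ∑ i, ⟪t i, x⟫ • t i, x⟫) / 2 := by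
  have h1 : ⟪∑ i, ⟪t i, x⟫ • t i, ∑ i, ⟪t i, x⟫ • t i⟫ = ∑ i, ⟪t i, x⟫ ^ 2 := by
    rw [ht.inner_sum]
    simp [sq]
  have h2 : ⟪∑ i, ⟪t i, x⟫ • t i, x⟫ = ∑ i, ⟪t i, x⟫ ^ 2 := by
    simp [sum_inner, real_inner_smul_left, sq]
  rw [norm_sub_sq_real, ← real_inner_self_eq_norm_sq (∑ i, ⟪t i, x⟫ • t i), h1,
    real_inner_comm, h2, inner_sub_left, real_inner_smul_left, h2, real_inner_self_eq_norm_sq]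
  ring

theorem norm_toEuclideanCLM_of_orthogonal {n : ℕ} (Q : Matrix (Fin n) (Fin n) ℝ)
    (hQ : Qᵀ * Q = 1) (x : EuclideanSpace ℝ (Fin n)) :
    ‖Matrix.toEuclideanCLM (𝕜 := ℝ) Q x‖ ^ 2 = ‖x‖ ^ 2 := by
  rw [← real_inner_self_eq_norm_sq, ← real_inner_self_eq_norm_sq,
    ← ContinuousLinearMap.adjoint_inner_left, ← ContinuousLinearMap.star_eq_adjoint, ← map_star,
    ← mul_apply_eq_comp, ← map_mul, Matrix.star_eq_conjTranspose,
    Matrix.conjTranspose_eq_transpose_of_trivial, hQ, map_one, one_apply_eq_self]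

/-- if `Πt` is an orthogonal matrix within operator-norm distance
`δ` of `Π = ∏ᵢ (I − 2 tᵢtᵢᵀ)` for orthonormal `t_1, …, t_j`, then
`Σ_k ‖((Πt + I)/2) A_k‖² ≤ Σ_k ‖A_k − Σᵢ ⟨tᵢ, A_k⟩ tᵢ‖² + ‖A‖_F² · δ/2`. -/
theorem perturbed_projection_residual_le {m n j : ℕ}
    (t : Fin j → EuclideanSpace ℝ (Fin n)) (ht : Orthonormal ℝ t)
    (P Pt : Matrix (Fin n) (Fin n) ℝ)
    (hP : P = (List.ofFn fun i =>
      (1 : Matrix (Fin n) (Fin n) ℝ) - (2 : ℝ) • Matrix.vecMulVec (t i) (t i)).prod)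
    (hOrth : Ptᵀ * Pt = 1)
    (δ : ℝ) (hδ : ‖Matrix.toEuclideanCLM (𝕜 := ℝ) (Pt - P)‖ ≤ δ)
    (A : Matrix (Fin m) (Fin n) ℝ) :
    ∑ k : Fin m,
        ‖(WithLp.equiv 2 (Fin n → ℝ)).symm
          (((2⁻¹ : ℝ) • (Pt + 1)).mulVec (A k))‖ ^ 2
      ≤ (∑ k : Fin m, ‖matRow A k - ∑ i, ⟪t i, matRow A k⟫ • t i‖ ^ 2) +
          (∑ a, ∑ b, A a b ^ 2) * δ / 2 := by
  have key : ∀ k : Fin m,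
      ‖(WithLp.equiv 2 (Fin n → ℝ)).symm (((2⁻¹ : ℝ) • (Pt + 1)).mulVec (A k))‖ ^ 2
        ≤ ‖matRow A k - ∑ i, ⟪t i, matRow A k⟫ • t i‖ ^ 2 + (∑ b, A k b ^ 2) * δ / 2 := by
    intro k
    have hx : ∑ b, A k b ^ 2 = ‖matRow A k‖ ^ 2 := by
      simp [matRow, EuclideanSpace.norm_sq_eq]
    have hl : (WithLp.equiv 2 (Fin n → ℝ)).symm (((2⁻¹ : ℝ) • (Pt + 1)).mulVec (A k))
        = (2⁻¹ : ℝ) • (Matrix.toEuclideanCLM (𝕜 := ℝ) Pt (matRow A k) + matRow A k) := by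
      ext i
      simp [matRow, Matrix.smul_mulVec, Matrix.add_mulVec]
    rw [hl, hx]
    generalize matRow A k = x
    have hd : ⟪Matrix.toEuclideanCLM (𝕜 := ℝ) (Pt - P) x, x⟫ ≤ δ * ‖x‖ ^ 2 :=
      calc _ ≤ ‖Matrix.toEuclideanCLM (𝕜 := ℝ) (Pt - P) x‖ * ‖x‖ := real_inner_le_norm _ _
        _ ≤ (δ * ‖x‖) * ‖x‖ := by
          gcongr
          exact ContinuousLinearMap.le_of_opNorm_le _ hδ x
        _ = δ * ‖x‖ ^ 2 := by ring
    rw [map_sub, _root_.sub_apply, inner_sub_left] at hd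
    rw [norm_sub_sum_sq t ht, ← toEuclideanCLM_prod_reflection t ht, ← hP, norm_smul, mul_pow,
      norm_add_sq_real, norm_toEuclideanCLM_of_orthogonal Pt hOrth]
    norm_num
    linarith
  calc _ ≤ _ := Finset.sum_le_sum fun k _ => key k
    _ = _ := by rw [Finset.sum_add_distrib, ← Finset.sum_div, ← Finset.sum_mul]
end
end

section
/- Let v, t, u ∈ ℝ^n be unit vectors with ⟨t, u⟩ = 0, and for vectors x, y ∈ ℝ^n let x y^T denote the n×n outer-product matrix with Frobenius norm ‖·‖_F. Then (1/16)·‖v t^T + v u^T + t v^T + u v^T‖_F² = (2 + ⟨v,t⟩² + ⟨v,u⟩² + 2⟨v,t⟩⟨v,u⟩)/8 and (1/16)·‖v t^T − v u^T − t v^T + u v^T‖_F² = (2 − ⟨v,t⟩² − ⟨v,u⟩² + 2⟨v,t⟩⟨v,u⟩)/8; consequently the sum of these two quantities equals (1 + ⟨v,t⟩⟨v,u⟩)/2. -/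
/-!
Put `w = t + u` in the first matrix and `w = t - u` in the second. The matrices are then
`v wᵀ + w vᵀ` and `v wᵀ - w vᵀ`, the symmetric and antisymmetric parts of `2 v wᵀ`, and
`‖v wᵀ ± w vᵀ‖_F² = 2 ‖v‖² ‖w‖² ± 2 ⟪v, w⟫²`, because the Frobenius inner product of `v wᵀ` with
`w vᵀ` is `⟪v, w⟫²`. As `t` and `u` are orthonormal, `‖w‖² = 2`, and `⟪v, w⟫ = ⟪v, t⟫ ± ⟪v, u⟫`.
-/

open scoped BigOperators
open Matrix RealInnerProductSpace

noncomputable section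

/-- The squared Frobenius norm of a real matrix. -/
noncomputable def frobeniusSq {m n : ℕ} (M : Matrix (Fin m) (Fin n) ℝ) : ℝ :=
  ∑ a, ∑ b, M a b ^ 2

/-- Taking `c = 1` and `c = -1` gives the symmetrized and antisymmetrized outer products. -/
theorem frobeniusSq_vecMulVec_add_smul {n : ℕ} (v w : EuclideanSpace ℝ (Fin n)) (c : ℝ) :
    frobeniusSq (Matrix.vecMulVec v w + c • Matrix.vecMulVec w v)
      = (1 + c ^ 2) * (‖v‖ ^ 2 * ‖w‖ ^ 2) + 2 * c * ⟪v, w⟫ ^ 2 := by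
  have hvw : ‖v‖ ^ 2 * ‖w‖ ^ 2 = ∑ a, ∑ b, v a ^ 2 * w b ^ 2 := by
    rw [EuclideanSpace.real_norm_sq_eq, EuclideanSpace.real_norm_sq_eq, Finset.sum_mul_sum]
  have hwv : ‖v‖ ^ 2 * ‖w‖ ^ 2 = ∑ a, ∑ b, w a ^ 2 * v b ^ 2 := by
    rw [mul_comm, EuclideanSpace.real_norm_sq_eq, EuclideanSpace.real_norm_sq_eq,
      Finset.sum_mul_sum]
  have hin : ⟪v, w⟫ ^ 2 = ∑ a, ∑ b, (v a * w a) * (v b * w b) := by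
    rw [← Finset.sum_mul_sum, ← sq]
    simp [PiLp.inner_apply, mul_comm]
  have hexp : frobeniusSq (Matrix.vecMulVec v w + c • Matrix.vecMulVec w v)
      = (∑ a, ∑ b, v a ^ 2 * w b ^ 2) + c ^ 2 * (∑ a, ∑ b, w a ^ 2 * v b ^ 2)
        + 2 * c * ∑ a, ∑ b, (v a * w a) * (v b * w b) := by
    simp only [frobeniusSq, Finset.mul_sum, ← Finset.sum_add_distrib]
    refine Finset.sum_congr rfl fun a _ => Finset.sum_congr rfl fun b _ => ?_
    simp only [Matrix.add_apply, Matrix.smul_apply, Matrix.vecMulVec_apply, smul_eq_mul]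
    ring
  rw [hexp, ← hvw, ← hwv, ← hin]
  ring

/-- the outcome probabilities of the modified SWAP test.  For unit
vectors `v, t, u ∈ ℝ^n` with `⟨t, u⟩ = 0`,
`(1/16)‖v tᵀ + v uᵀ + t vᵀ + u vᵀ‖_F² = (2 + ⟨v,t⟩² + ⟨v,u⟩² + 2⟨v,t⟩⟨v,u⟩)/8`,
`(1/16)‖v tᵀ − v uᵀ − t vᵀ + u vᵀ‖_F² = (2 − ⟨v,t⟩² − ⟨v,u⟩² + 2⟨v,t⟩⟨v,u⟩)/8`,
and the sum of the two quantities equals `(1 + ⟨v,t⟩⟨v,u⟩)/2`. -/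
theorem swap_test_probabilities {n : ℕ}
    (v t u : EuclideanSpace ℝ (Fin n))
    (hv : ‖v‖ = 1) (ht : ‖t‖ = 1) (hu : ‖u‖ = 1)
    (htu : ⟪t, u⟫ = 0) :
    (1 / 16) * frobeniusSq
        (Matrix.vecMulVec v t + Matrix.vecMulVec v u +
          Matrix.vecMulVec t v + Matrix.vecMulVec u v)
      = (2 + ⟪v, t⟫ ^ 2 + ⟪v, u⟫ ^ 2 + 2 * ⟪v, t⟫ * ⟪v, u⟫) / 8 ∧
    (1 / 16) * frobeniusSq
        (Matrix.vecMulVec v t - Matrix.vecMulVec v u -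
          Matrix.vecMulVec t v + Matrix.vecMulVec u v)
      = (2 - ⟪v, t⟫ ^ 2 - ⟪v, u⟫ ^ 2 + 2 * ⟪v, t⟫ * ⟪v, u⟫) / 8 ∧
    (1 / 16) * frobeniusSq
        (Matrix.vecMulVec v t + Matrix.vecMulVec v u +
          Matrix.vecMulVec t v + Matrix.vecMulVec u v) +
      (1 / 16) * frobeniusSq
        (Matrix.vecMulVec v t - Matrix.vecMulVec v u -
          Matrix.vecMulVec t v + Matrix.vecMulVec u v)
      = (1 + ⟪v, t⟫ * ⟪v, u⟫) / 2 := by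
  have hplus : Matrix.vecMulVec v t + Matrix.vecMulVec v u + Matrix.vecMulVec t v
      + Matrix.vecMulVec u v
      = Matrix.vecMulVec v (t + u) + (1 : ℝ) • Matrix.vecMulVec (t + u) v := by
    ext a b
    simp [Matrix.vecMulVec_apply]
    ring
  have hminus : Matrix.vecMulVec v t - Matrix.vecMulVec v u - Matrix.vecMulVec t v
      + Matrix.vecMulVec u v
      = Matrix.vecMulVec v (t - u) + (-1 : ℝ) • Matrix.vecMulVec (t - u) v := by
    ext a b
    simp [Matrix.vecMulVec_apply]
    ring
  have hp : ‖t + u‖ ^ 2 = 2 := by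
    rw [norm_add_sq_real, htu, ht, hu]
    norm_num
  have hm : ‖t - u‖ ^ 2 = 2 := by
    rw [norm_sub_sq_real, htu, ht, hu]
    norm_num
  have h₁ := frobeniusSq_vecMulVec_add_smul v (t + u) 1
  have h₂ := frobeniusSq_vecMulVec_add_smul v (t - u) (-1)
  rw [← hplus, hp, hv, inner_add_right] at h₁
  rw [← hminus, hm, hv, inner_sub_right] at h₂
  rw [h₁, h₂]
  refine ⟨?_, ?_, ?_⟩ <;> ring
end
end
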